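/- Let R be a commutative semiring that is negative free and has no zero divisors. Then every invertible n×n matrix over R is a generalized permutation matrix: for every A in GL_n(R) there exist a permutation σ of {1, …, n} and units u₁, …, u_n ∈ R^× such that A_{ij} = uᵢ if j = σ(i) and A_{ij} = 0 otherwise. Equivalently, GL_n(R) ≅ (R^×)^n ⋊ S_n. -/

import Mathlib

/-!
The off-diagonal entries of `A * B = 1` and `B * A = 1` are vanishing sums, so by negative
freeness every term `A i j * B j k` with `i ≠ k`, and every term `B j k * A k l` with `j ≠ l`,
is zero. Since `0 ≠ 1`, the diagonal entry `∑ j, A i j * B j i = 1` has a nonzero term, at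
`j = σ i` say. As `B (σ i) i ≠ 0` and there are no zero divisors, `A i l = 0` for all `l ≠ σ i`.
The diagonal sum thus reduces to `A i (σ i) * B (σ i) i = 1`, so `A i (σ i)` is a unit; and
`σ i = σ k` with `i ≠ k` would make the product `A i (σ i) * B (σ i) k` of nonzero factors vanish,
so `σ` is injective.
-/

universe u

/-- In a negative-free semiring, a vanishing finite sum has only zero terms. -/
theorem term_eq_zero_of_sum_eq_zero {R : Type u} [CommSemiring R]
    (hnf : ∀ x y : R, x + y = 0 → x = 0 ∧ y = 0) {ι : Type*} (s : Finset ι) (f : ι → R)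
    (h : ∑ i ∈ s, f i = 0) : ∀ i ∈ s, f i = 0 := by
  classical
  intro i hi
  rw [← Finset.add_sum_erase s f hi] at h
  exact (hnf _ _ h).1

theorem mul_entry_eq_zero {R : Type u} [CommSemiring R]
    (hnf : ∀ x y : R, x + y = 0 → x = 0 ∧ y = 0) {n : ℕ} {A B : Matrix (Fin n) (Fin n) R}
    (hAB : A * B = 1) {i k : Fin n} (hik : i ≠ k) (j : Fin n) : A i j * B j k = 0 := by
  have h := congrFun (congrFun hAB i) k
  rw [Matrix.mul_apply, Matrix.one_apply_ne hik] at h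
  exact term_eq_zero_of_sum_eq_zero hnf _ _ h j (Finset.mem_univ j)

/-- Over a negative-free commutative semiring with no zero divisors, every matrix
with a two-sided inverse is a generalized permutation matrix. -/
theorem invertible_matrix_is_generalized_permutation (R : Type u) [CommSemiring R]
    (hnf : ∀ x y : R, x + y = 0 → x = 0 ∧ y = 0)
    (hzd : ∀ x y : R, x * y = 0 → x = 0 ∨ y = 0)
    (hnt : (0 : R) ≠ 1)
    (n : ℕ) (A B : Matrix (Fin n) (Fin n) R)
    (hAB : A * B = 1) (hBA : B * A = 1) :
    ∃ (σ : Equiv.Perm (Fin n)) (u : Fin n → Rˣ),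
      ∀ i j : Fin n, A i j = if j = σ i then (u i : R) else 0 := by
  have hdiag : ∀ i, ∑ j, A i j * B j i = 1 := fun i => by
    rw [← Matrix.mul_apply, hAB, Matrix.one_apply_eq]
  have hex : ∀ i, ∃ j, A i j * B j i ≠ 0 := by
    intro i
    by_contra! h
    exact hnt (by rw [← hdiag i, Finset.sum_eq_zero fun j _ => h j])
  choose σ hσ using hex
  have hA : ∀ i, A i (σ i) ≠ 0 := fun i => left_ne_zero_of_mul (hσ i)
  have hB : ∀ i, B (σ i) i ≠ 0 := fun i => right_ne_zero_of_mul (hσ i)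
  have hzero : ∀ i l, l ≠ σ i → A i l = 0 := fun i l hl =>
    (hzd _ _ (mul_entry_eq_zero hnf hBA hl.symm i)).resolve_left (hB i)
  have hunit : ∀ i, A i (σ i) * B (σ i) i = 1 := by
    intro i
    rw [← hdiag i, eq_comm]
    refine Finset.sum_eq_single (σ i) (fun j _ hj => ?_)
      fun h => absurd (Finset.mem_univ _) h
    rw [hzero i j hj, zero_mul]
  have hinj : Function.Injective σ := by
    intro i k hik
    by_contra hne
    rcases hzd _ _ (mul_entry_eq_zero hnf hAB hne (σ i)) with h | h
    · exact hA i h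
    · exact hB k (hik ▸ h)
  refine ⟨Equiv.ofBijective σ (Finite.injective_iff_bijective.mp hinj),
    fun i => Units.mkOfMulEqOne _ _ (hunit i), fun i j => ?_⟩
  by_cases h : j = σ i
  · simp [h]
  · simp [h, hzero i j h]
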